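/- Let n^m, n^{m−1}, p^m, p^{m−1} be pointwise-positive periodic grid functions such that n^m − p^m and n^{m−1} − p^{m−1} have zero mean, and let (n^{m+1}, p^{m+1}) be a pointwise-positive solution of the scheme with n^{m+1} − p^{m+1} of zero mean, with associated chemical potentials μ_n, μ_p. Set R = Δt·h³·Σ_{i,j,k} (M̆_n^x·(D_x μ_n)² + M̆_n^y·(D_y μ_n)² + M̆_n^z·(D_z μ_n)² + M̆_p^x·(D_x μ_p)² + M̆_p^y·(D_y μ_p)² + M̆_p^z·(D_z μ_p)²). Then R ≥ 0 and E_h(n^{m+1}, p^{m+1}) + R ≤ E_h(n^m, p^m); in particular E_h(n^{m+1}, p^{m+1}) ≤ E_h(n^m, p^m). -/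

import Mathlib

open scoped BigOperators

/-- The periodic grid of indices: `(ZMod N)^3`. -/
abbrev GridIdx (N : ℕ) := ZMod N × ZMod N × ZMod N

namespace PNP

/-- Shift the first index by `a`. -/
def xsh {N : ℕ} (p : GridIdx N) (a : ZMod N) : GridIdx N := (p.1 + a, p.2.1, p.2.2)
/-- Shift the second index by `a`. -/
def ysh {N : ℕ} (p : GridIdx N) (a : ZMod N) : GridIdx N := (p.1, p.2.1 + a, p.2.2)
/-- Shift the third index by `a`. -/
def zsh {N : ℕ} (p : GridIdx N) (a : ZMod N) : GridIdx N := (p.1, p.2.1, p.2.2 + a)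

/-- Forward difference in `x`: `(D_x f)(p) = (f(p + e_x) - f(p)) / h` with `h = 1/N`. -/
noncomputable def Dx (N : ℕ) (f : GridIdx N → ℝ) : GridIdx N → ℝ :=
  fun p => (f (xsh p 1) - f p) * N
/-- Forward difference in `y`. -/
noncomputable def Dy (N : ℕ) (f : GridIdx N → ℝ) : GridIdx N → ℝ :=
  fun p => (f (ysh p 1) - f p) * N
/-- Forward difference in `z`. -/
noncomputable def Dz (N : ℕ) (f : GridIdx N → ℝ) : GridIdx N → ℝ :=
  fun p => (f (zsh p 1) - f p) * N

/-- Backward difference in `x`: `(d_x f)(p) = (f(p) - f(p - e_x)) / h`. -/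
noncomputable def dxm (N : ℕ) (f : GridIdx N → ℝ) : GridIdx N → ℝ :=
  fun p => (f p - f (xsh p (-1))) * N
/-- Backward difference in `y`. -/
noncomputable def dym (N : ℕ) (f : GridIdx N → ℝ) : GridIdx N → ℝ :=
  fun p => (f p - f (ysh p (-1))) * N
/-- Backward difference in `z`. -/
noncomputable def dzm (N : ℕ) (f : GridIdx N → ℝ) : GridIdx N → ℝ :=
  fun p => (f p - f (zsh p (-1))) * N

/-- Forward average in `x`: `(A_x f)(p) = (f(p + e_x) + f(p)) / 2`. -/
noncomputable def Ax (N : ℕ) (f : GridIdx N → ℝ) : GridIdx N → ℝ :=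
  fun p => (f (xsh p 1) + f p) / 2
/-- Forward average in `y`. -/
noncomputable def Ay (N : ℕ) (f : GridIdx N → ℝ) : GridIdx N → ℝ :=
  fun p => (f (ysh p 1) + f p) / 2
/-- Forward average in `z`. -/
noncomputable def Az (N : ℕ) (f : GridIdx N → ℝ) : GridIdx N → ℝ :=
  fun p => (f (zsh p 1) + f p) / 2

/-- The discrete Laplacian `Δ_h f = d_x(D_x f) + d_y(D_y f) + d_z(D_z f)`. -/
noncomputable def lap (N : ℕ) (f : GridIdx N → ℝ) : GridIdx N → ℝ :=
  fun p => dxm N (Dx N f) p + dym N (Dy N f) p + dzm N (Dz N f) p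

/-- The discrete inner product `⟨f, g⟩ = h³ ∑ f·g` with `h = 1/N`. -/
noncomputable def ip (N : ℕ) [NeZero N] (f g : GridIdx N → ℝ) : ℝ :=
  ((1 : ℝ) / N) ^ 3 * ∑ p : GridIdx N, f p * g p

/-- The discrete `L²` norm `‖f‖₂ = ⟨f, f⟩^{1/2}`. -/
noncomputable def l2 (N : ℕ) [NeZero N] (f : GridIdx N → ℝ) : ℝ :=
  Real.sqrt (ip N f f)

/-- The discrete maximum norm `‖f‖_∞ = max |f|`. -/
noncomputable def linf (N : ℕ) [NeZero N] (f : GridIdx N → ℝ) : ℝ :=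
  ⨆ p : GridIdx N, |f p|

/-- A grid function has zero mean if its values sum to zero. -/
def zeroMean (N : ℕ) [NeZero N] (f : GridIdx N → ℝ) : Prop :=
  ∑ p : GridIdx N, f p = 0

/-- With `F(x) = x·ln x`, the difference quotient `G¹_a(x) = (F(x) - F(a))/(x - a)`
for `x ≠ a`, with value `F'(a) = ln a + 1` at `x = a`. -/
noncomputable def G1 (a x : ℝ) : ℝ :=
  if x = a then Real.log a + 1
  else (x * Real.log x - a * Real.log a) / (x - a)

end PNP

open PNP

namespace PNP

/-- Regularized face mobility (in `x`) built from the extrapolation `(3/2)a - (1/2)b`: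
`((A_x((3/2)a - (1/2)b))² + Δt⁶)^{1/2}`. -/
noncomputable def mobX (N : ℕ) (dt : ℝ) (a b : GridIdx N → ℝ) : GridIdx N → ℝ :=
  fun p => Real.sqrt ((Ax N (fun q => (3/2) * a q - (1/2) * b q) p) ^ 2 + dt ^ 6)
/-- Regularized face mobility (in `y`). -/
noncomputable def mobY (N : ℕ) (dt : ℝ) (a b : GridIdx N → ℝ) : GridIdx N → ℝ :=
  fun p => Real.sqrt ((Ay N (fun q => (3/2) * a q - (1/2) * b q) p) ^ 2 + dt ^ 6)
/-- Regularized face mobility (in `z`). -/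
noncomputable def mobZ (N : ℕ) (dt : ℝ) (a b : GridIdx N → ℝ) : GridIdx N → ℝ :=
  fun p => Real.sqrt ((Az N (fun q => (3/2) * a q - (1/2) * b q) p) ^ 2 + dt ^ 6)

/-- The pair `(n1, p1)` solves the second-order scheme with data
`n0, nm1, p0, pm1`, with the chemical potentials `μn, μp`. -/
def SolvesSchemeWith (N : ℕ) [NeZero N] (dt Dc : ℝ)
    (n0 nm1 p0 pm1 n1 p1 μn μp : GridIdx N → ℝ) : Prop :=
  ∃ φn φp : GridIdx N → ℝ,
    zeroMean N φn ∧
    (∀ q, -lap N φn q = (n1 q + n0 q) / 2 - (p1 q + p0 q) / 2) ∧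
    zeroMean N φp ∧
    (∀ q, -lap N φp q = (p1 q + p0 q) / 2 - (n1 q + n0 q) / 2) ∧
    (∀ q, μn q = G1 (n0 q) (n1 q) - 1
      + dt * (Real.log (n1 q) - Real.log (n0 q)) + φn q) ∧
    (∀ q, μp q = G1 (p0 q) (p1 q) - 1
      + dt * (Real.log (p1 q) - Real.log (p0 q)) + φp q) ∧
    (∀ q, (n1 q - n0 q) / dt =
      dxm N (fun r => mobX N dt n0 nm1 r * Dx N μn r) q +
      dym N (fun r => mobY N dt n0 nm1 r * Dy N μn r) q +
      dzm N (fun r => mobZ N dt n0 nm1 r * Dz N μn r) q) ∧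
    (∀ q, (p1 q - p0 q) / dt =
      dxm N (fun r => mobX N dt (fun s => Dc * p0 s) (fun s => Dc * pm1 s) r * Dx N μp r) q +
      dym N (fun r => mobY N dt (fun s => Dc * p0 s) (fun s => Dc * pm1 s) r * Dy N μp r) q +
      dzm N (fun r => mobZ N dt (fun s => Dc * p0 s) (fun s => Dc * pm1 s) r * Dz N μp r) q)

/-- The pair `(n1, p1)` solves the second-order scheme, for some chemical potentials. -/
def SolvesScheme (N : ℕ) [NeZero N] (dt Dc : ℝ)
    (n0 nm1 p0 pm1 n1 p1 : GridIdx N → ℝ) : Prop :=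
  ∃ μn μp : GridIdx N → ℝ, SolvesSchemeWith N dt Dc n0 nm1 p0 pm1 n1 p1 μn μp

end PNP

/-!
The increment `w` of each concentration is a discrete divergence, `w = dt * div (M ∇μ)`, so testing
it with the chemical potential `μ` and summing by parts gives exactly `-dt` times the dissipation.
On the other hand `μ` splits as `G¹ - 1 + dt * (ln u₁ - ln u₀) + φ`: the difference quotient `G¹`
reproduces the exact change of `u ln u`, the constant is annihilated by mass conservation, the
logarithmic term is nonnegative because `ln` is monotone, and the two `φ` terms add up to the exact
change of the electrostatic energy, as `φ` is `±` the midpoint of the old and new potentials up to the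
kernel of the gradient, to which every divergence is orthogonal.
-/

namespace PNP

section ShiftOperators

variable {X ι : Type*} (s : ι → Equiv.Perm X) (c : ℝ)

/-- The forward-difference gradient on a set of cells `X`, where the permutation `s i` moves a cell
to its neighbour in direction `i` and `c` is the inverse mesh size. Permutations encode periodicity,
for any number of directions. -/
def shiftGrad : (X → ℝ) →ₗ[ℝ] (ι → X → ℝ) where
  toFun f i x := (f (s i x) - f x) * c
  map_add' f g := by ext i x; simp only [Pi.add_apply]; ring
  map_smul' a f := by ext i x; simp only [Pi.smul_apply, smul_eq_mul, RingHom.id_apply]; ring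

variable [Fintype ι]

/-- The backward-difference divergence of a flux, the negative adjoint of `shiftGrad`. -/
def shiftDiv : (ι → X → ℝ) →ₗ[ℝ] (X → ℝ) where
  toFun F x := ∑ i, (F i x - F i ((s i).symm x)) * c
  map_add' F G := by
    ext x
    simp only [Pi.add_apply, ← Finset.sum_add_distrib]
    exact Finset.sum_congr rfl fun i _ => by ring
  map_smul' a F := by
    ext x
    simp only [Pi.smul_apply, smul_eq_mul, RingHom.id_apply, Finset.mul_sum]
    exact Finset.sum_congr rfl fun i _ => by ring

/-- The Laplacian `div ∘ grad` of the shifts `s`. -/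
def shiftLap : (X → ℝ) →ₗ[ℝ] (X → ℝ) := shiftDiv s c ∘ₗ shiftGrad s c

variable {s c}

lemma dotProduct_shiftDiv [Fintype X] (f : X → ℝ) (F : ι → X → ℝ) :
    f ⬝ᵥ shiftDiv s c F = -∑ i, shiftGrad s c f i ⬝ᵥ F i := by
  have direction (i : ι) : ∑ x, f x * ((F i x - F i ((s i).symm x)) * c) =
      -∑ x, (f (s i x) - f x) * c * F i x := by
    have shift : ∑ x, f x * F i ((s i).symm x) = ∑ x, f (s i x) * F i x :=
      dotProduct_comp_equiv_symm f (F i) (s i)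
    simp only [mul_sub, sub_mul, ← mul_assoc, Finset.sum_sub_distrib]
    simp only [mul_right_comm _ c, ← Finset.sum_mul, shift]
    ring
  simp only [dotProduct, shiftDiv, shiftGrad, LinearMap.coe_mk, AddHom.coe_mk, Finset.mul_sum]
  rw [Finset.sum_comm, ← Finset.sum_neg_distrib]
  exact Finset.sum_congr rfl fun i _ => direction i

lemma dotProduct_shiftLap [Fintype X] (f g : X → ℝ) :
    f ⬝ᵥ shiftLap s c g = -∑ i, shiftGrad s c f i ⬝ᵥ shiftGrad s c g i :=
  dotProduct_shiftDiv f (shiftGrad s c g)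

lemma dotProduct_shiftLap_comm [Fintype X] (f g : X → ℝ) :
    f ⬝ᵥ shiftLap s c g = g ⬝ᵥ shiftLap s c f := by
  simp only [dotProduct_shiftLap, dotProduct_comm]

lemma shiftGrad_eq_zero_of_shiftLap_eq_zero [Finite X] {f : X → ℝ} (hf : shiftLap s c f = 0) :
    shiftGrad s c f = 0 := by
  cases nonempty_fintype X
  have energy : ∑ i, shiftGrad s c f i ⬝ᵥ shiftGrad s c f i = 0 := by
    rw [← neg_eq_zero, ← dotProduct_shiftLap, hf, dotProduct_zero]
  have nonneg (i : ι) : 0 ≤ shiftGrad s c f i ⬝ᵥ shiftGrad s c f i :=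
    Finset.sum_nonneg fun x _ => mul_self_nonneg _
  ext1 i
  exact dotProduct_self_eq_zero.1
    ((Finset.sum_eq_zero_iff_of_nonneg fun i _ => nonneg i).1 energy i (Finset.mem_univ i))

lemma dotProduct_eq_of_shiftLap_eq [Fintype X] {w f g : X → ℝ}
    (hw : w ∈ LinearMap.range (shiftDiv s c)) (h : shiftLap s c f = shiftLap s c g) :
    w ⬝ᵥ f = w ⬝ᵥ g := by
  obtain ⟨F, rfl⟩ := hw
  have hgrad : shiftGrad s c (f - g) = 0 :=
    shiftGrad_eq_zero_of_shiftLap_eq_zero (by rw [map_sub, h, sub_self])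
  rw [← sub_eq_zero, ← dotProduct_sub, dotProduct_comm, dotProduct_shiftDiv, hgrad]
  simp

lemma dotProduct_one_eq_zero_of_mem_range_shiftDiv [Fintype X] {w : X → ℝ}
    (hw : w ∈ LinearMap.range (shiftDiv s c)) : w ⬝ᵥ 1 = 0 := by
  obtain ⟨F, rfl⟩ := hw
  rw [dotProduct_comm, dotProduct_shiftDiv]
  simp [shiftGrad, dotProduct]

lemma shiftLap_sub_dotProduct_midpoint [Fintype X] (ψ₀ ψ₁ : X → ℝ) :
    (shiftLap s c ψ₁ - shiftLap s c ψ₀) ⬝ᵥ ((1 / 2 : ℝ) • (ψ₁ + ψ₀)) =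
      1 / 2 * (shiftLap s c ψ₁ ⬝ᵥ ψ₁) - 1 / 2 * (shiftLap s c ψ₀ ⬝ᵥ ψ₀) := by
  have cross : shiftLap s c ψ₁ ⬝ᵥ ψ₀ = shiftLap s c ψ₀ ⬝ᵥ ψ₁ := by
    rw [dotProduct_comm, dotProduct_shiftLap_comm, dotProduct_comm]
  rw [dotProduct_smul, dotProduct_add, sub_dotProduct, sub_dotProduct, cross, smul_eq_mul]
  ring

lemma dotProduct_potentials_eq_sub_fieldEnergy [Fintype X]
    {n₀ n₁ p₀ p₁ φn φp ψ₀ ψ₁ : X → ℝ}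
    (hn : n₁ - n₀ ∈ LinearMap.range (shiftDiv s c))
    (hp : p₁ - p₀ ∈ LinearMap.range (shiftDiv s c))
    (hφn : ∀ x, -shiftLap s c φn x = (n₁ x + n₀ x) / 2 - (p₁ x + p₀ x) / 2)
    (hφp : ∀ x, -shiftLap s c φp x = (p₁ x + p₀ x) / 2 - (n₁ x + n₀ x) / 2)
    (hψ₀ : ∀ x, -shiftLap s c ψ₀ x = n₀ x - p₀ x)
    (hψ₁ : ∀ x, -shiftLap s c ψ₁ x = n₁ x - p₁ x) :
    (n₁ - n₀) ⬝ᵥ φn + (p₁ - p₀) ⬝ᵥ φp =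
      1 / 2 * ((n₁ - p₁) ⬝ᵥ ψ₁) - 1 / 2 * ((n₀ - p₀) ⬝ᵥ ψ₀) := by
  set ψ : X → ℝ := (1 / 2 : ℝ) • (ψ₁ + ψ₀) with hψ
  have hφn_mid : shiftLap s c φn = shiftLap s c ψ := by
    ext x
    simp only [hψ, map_smul, map_add, Pi.smul_apply, Pi.add_apply, smul_eq_mul]
    linarith [hφn x, hψ₀ x, hψ₁ x]
  have hφp_mid : shiftLap s c φp = shiftLap s c (-ψ) := by
    ext x
    simp only [hψ, map_neg, map_smul, map_add, Pi.neg_apply, Pi.smul_apply, Pi.add_apply,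
      smul_eq_mul]
    linarith [hφp x, hψ₀ x, hψ₁ x]
  have hρ₀ : n₀ - p₀ = -shiftLap s c ψ₀ := funext fun x => (hψ₀ x).symm
  have hρ₁ : n₁ - p₁ = -shiftLap s c ψ₁ := funext fun x => (hψ₁ x).symm
  calc (n₁ - n₀) ⬝ᵥ φn + (p₁ - p₀) ⬝ᵥ φp
      = (n₁ - n₀) ⬝ᵥ ψ + (p₁ - p₀) ⬝ᵥ (-ψ) := by
        rw [dotProduct_eq_of_shiftLap_eq hn hφn_mid, dotProduct_eq_of_shiftLap_eq hp hφp_mid]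
    _ = ((n₁ - p₁) - (n₀ - p₀)) ⬝ᵥ ψ := by
        simp only [sub_dotProduct, dotProduct_neg]
        ring
    _ = -((shiftLap s c ψ₁ - shiftLap s c ψ₀) ⬝ᵥ ψ) := by
        rw [hρ₀, hρ₁, ← neg_dotProduct]
        congr 1
        abel
    _ = 1 / 2 * ((n₁ - p₁) ⬝ᵥ ψ₁) - 1 / 2 * ((n₀ - p₀) ⬝ᵥ ψ₀) := by
        rw [shiftLap_sub_dotProduct_midpoint, hρ₀, hρ₁, neg_dotProduct, neg_dotProduct]
        ring

end ShiftOperators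

section Species

lemma sub_mul_G1 (a x : ℝ) : (x - a) * G1 a x = x * Real.log x - a * Real.log a := by
  unfold G1
  split_ifs with h
  · simp [h]
  · exact mul_div_cancel₀ _ (sub_ne_zero.2 h)

lemma sub_mul_log_sub_log_nonneg {a x : ℝ} (ha : 0 < a) (hx : 0 < x) :
    0 ≤ (x - a) * (Real.log x - Real.log a) :=
  (monotoneOn_id.monovaryOn Real.strictMonoOn_log.monotoneOn).sub_mul_sub_nonneg ha hx

variable {X ι : Type*} [Fintype ι]

/-- One time step `u₀ ↦ u₁` of a single species with mobility `M` in the potential `φ`: the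
chemical potential is `μ`, and `u` evolves by the conservation law with flux `-M ∇μ`. -/
structure IsSpeciesStep (s : ι → Equiv.Perm X) (c dt : ℝ) (M : ι → X → ℝ)
    (u₀ u₁ φ μ : X → ℝ) : Prop where
  chemicalPotential : ∀ x, μ x = G1 (u₀ x) (u₁ x) - 1
    + dt * (Real.log (u₁ x) - Real.log (u₀ x)) + φ x
  conservation : ∀ x, (u₁ x - u₀ x) / dt = shiftDiv s c (M * shiftGrad s c μ) x

variable {s : ι → Equiv.Perm X} {c dt : ℝ} {M : ι → X → ℝ} {u₀ u₁ φ μ : X → ℝ}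

lemma IsSpeciesStep.sub_eq (h : IsSpeciesStep s c dt M u₀ u₁ φ μ) (hdt : dt ≠ 0) :
    u₁ - u₀ = dt • shiftDiv s c (M * shiftGrad s c μ) := by
  ext x
  rw [Pi.smul_apply, ← h.conservation x, Pi.sub_apply, smul_eq_mul, mul_div_cancel₀ _ hdt]

lemma IsSpeciesStep.sub_mem_range_shiftDiv (h : IsSpeciesStep s c dt M u₀ u₁ φ μ)
    (hdt : dt ≠ 0) : u₁ - u₀ ∈ LinearMap.range (shiftDiv s c) := by
  rw [h.sub_eq hdt]
  exact Submodule.smul_mem _ _ (LinearMap.mem_range_self _ _)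

variable [Fintype X]

/-- The entropic part `∑ u ln u` of the energy, without the cell volume. -/
noncomputable def mixingEntropy (u : X → ℝ) : ℝ := ∑ x, u x * Real.log (u x)

lemma sub_dotProduct_G1 (u₀ u₁ : X → ℝ) :
    ((u₁ - u₀) ⬝ᵥ fun x => G1 (u₀ x) (u₁ x)) = mixingEntropy u₁ - mixingEntropy u₀ := by
  simp only [dotProduct, Pi.sub_apply, sub_mul_G1, Finset.sum_sub_distrib, mixingEntropy]

/-- The dissipation `∑ M |∇μ|²` of a species, without the cell volume. -/
def dissipation (s : ι → Equiv.Perm X) (c : ℝ) (M : ι → X → ℝ) (μ : X → ℝ) : ℝ :=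
  ∑ x, ∑ i, M i x * shiftGrad s c μ i x ^ 2

lemma dissipation_nonneg (hM : ∀ i x, 0 ≤ M i x) : 0 ≤ dissipation s c M μ :=
  Finset.sum_nonneg fun x _ => Finset.sum_nonneg fun i _ => mul_nonneg (hM i x) (sq_nonneg _)

lemma dotProduct_shiftDiv_mul_shiftGrad :
    μ ⬝ᵥ shiftDiv s c (M * shiftGrad s c μ) = -dissipation s c M μ := by
  rw [dotProduct_shiftDiv, dissipation, Finset.sum_comm]
  simp only [dotProduct, Pi.mul_apply, mul_left_comm, sq]

lemma IsSpeciesStep.sub_dotProduct_chemicalPotential (h : IsSpeciesStep s c dt M u₀ u₁ φ μ)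
    (hdt : dt ≠ 0) : (u₁ - u₀) ⬝ᵥ μ = -(dt * dissipation s c M μ) := by
  rw [h.sub_eq hdt, smul_dotProduct, dotProduct_comm, dotProduct_shiftDiv_mul_shiftGrad,
    smul_eq_mul, mul_neg]

lemma IsSpeciesStep.mixingEntropy_add_le (h : IsSpeciesStep s c dt M u₀ u₁ φ μ) (hdt : 0 < dt)
    (hu₀ : ∀ x, 0 < u₀ x) (hu₁ : ∀ x, 0 < u₁ x) :
    mixingEntropy u₁ + (u₁ - u₀) ⬝ᵥ φ + dt * dissipation s c M μ ≤ mixingEntropy u₀ := by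
  set logGap : X → ℝ := fun x => Real.log (u₁ x) - Real.log (u₀ x)
  have hμ : μ = (fun x => G1 (u₀ x) (u₁ x)) - 1 + dt • logGap + φ :=
    funext h.chemicalPotential
  have mass : (u₁ - u₀) ⬝ᵥ 1 = 0 :=
    dotProduct_one_eq_zero_of_mem_range_shiftDiv (h.sub_mem_range_shiftDiv hdt.ne')
  have monotonicity : 0 ≤ dt * ((u₁ - u₀) ⬝ᵥ logGap) :=
    mul_nonneg hdt.le <| Finset.sum_nonneg fun x _ => sub_mul_log_sub_log_nonneg (hu₀ x) (hu₁ x)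
  have balance : mixingEntropy u₁ - mixingEntropy u₀ + dt * ((u₁ - u₀) ⬝ᵥ logGap)
      + (u₁ - u₀) ⬝ᵥ φ = -(dt * dissipation s c M μ) := by
    rw [← h.sub_dotProduct_chemicalPotential hdt.ne', hμ, dotProduct_add, dotProduct_add,
      dotProduct_sub, mass, sub_zero, sub_dotProduct_G1, dotProduct_smul, smul_eq_mul]
  linarith

end Species

/-- The discrete energy of the concentrations `n` and `p` for the cell volume `w`. The potential `ψ`
stands for `(-Δ_h)⁻¹ (n - p)`. -/
noncomputable def energy {X : Type*} [Fintype X] (w : ℝ) (n p ψ : X → ℝ) : ℝ :=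
  w * (mixingEntropy n + mixingEntropy p) + 1 / 2 * (w * ((n - p) ⬝ᵥ ψ))

end PNP

theorem stmt10_general {X ι : Type*} [Fintype X] [Fintype ι] (s : ι → Equiv.Perm X)
    {c w dt : ℝ} (hw : 0 ≤ w) (hdt : 0 < dt) {Mn Mp : ι → X → ℝ}
    (hMn : ∀ i x, 0 ≤ Mn i x) (hMp : ∀ i x, 0 ≤ Mp i x)
    {n₀ n₁ p₀ p₁ φn φp μn μp ψ₀ ψ₁ : X → ℝ}
    (hn₀ : ∀ x, 0 < n₀ x) (hn₁ : ∀ x, 0 < n₁ x) (hp₀ : ∀ x, 0 < p₀ x) (hp₁ : ∀ x, 0 < p₁ x)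
    (hn : IsSpeciesStep s c dt Mn n₀ n₁ φn μn) (hp : IsSpeciesStep s c dt Mp p₀ p₁ φp μp)
    (hφn : ∀ x, -shiftLap s c φn x = (n₁ x + n₀ x) / 2 - (p₁ x + p₀ x) / 2)
    (hφp : ∀ x, -shiftLap s c φp x = (p₁ x + p₀ x) / 2 - (n₁ x + n₀ x) / 2)
    (hψ₀ : ∀ x, -shiftLap s c ψ₀ x = n₀ x - p₀ x)
    (hψ₁ : ∀ x, -shiftLap s c ψ₁ x = n₁ x - p₁ x) :
    0 ≤ dt * (w * (dissipation s c Mn μn + dissipation s c Mp μp)) ∧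
      energy w n₁ p₁ ψ₁ + dt * (w * (dissipation s c Mn μn + dissipation s c Mp μp)) ≤
        energy w n₀ p₀ ψ₀ := by
  have entropy_n := hn.mixingEntropy_add_le hdt hn₀ hn₁
  have entropy_p := hp.mixingEntropy_add_le hdt hp₀ hp₁
  have field := dotProduct_potentials_eq_sub_fieldEnergy (hn.sub_mem_range_shiftDiv hdt.ne')
    (hp.sub_mem_range_shiftDiv hdt.ne') hφn hφp hψ₀ hψ₁
  refine ⟨mul_nonneg hdt.le (mul_nonneg hw (add_nonneg (dissipation_nonneg hMn)
    (dissipation_nonneg hMp))), ?_⟩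
  have total := mul_le_mul_of_nonneg_left (add_le_add entropy_n entropy_p) hw
  unfold energy
  linear_combination total - w * field

namespace PNP

section Grid

variable (N : ℕ)

/-- The unit shifts of the periodic grid in the three coordinate directions. -/
def gridShift : Fin 3 → Equiv.Perm (GridIdx N) :=
  ![(Equiv.addRight 1).prodCongr (Equiv.refl _),
    (Equiv.refl _).prodCongr ((Equiv.addRight 1).prodCongr (Equiv.refl _)),
    (Equiv.refl _).prodCongr ((Equiv.refl _).prodCongr (Equiv.addRight 1))]

/-- The three face mobilities of a species as one field indexed by the direction. -/
noncomputable def mobility (dt : ℝ) (a b : GridIdx N → ℝ) : Fin 3 → GridIdx N → ℝ :=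
  ![mobX N dt a b, mobY N dt a b, mobZ N dt a b]

lemma mobility_nonneg (dt : ℝ) (a b : GridIdx N → ℝ) (i : Fin 3) (q : GridIdx N) :
    0 ≤ mobility N dt a b i q := by
  fin_cases i <;> exact Real.sqrt_nonneg _

lemma shiftDiv_gridShift (F : Fin 3 → GridIdx N → ℝ) (q : GridIdx N) :
    shiftDiv (gridShift N) N F q = dxm N (F 0) q + dym N (F 1) q + dzm N (F 2) q := by
  simp only [shiftDiv, LinearMap.coe_mk, AddHom.coe_mk, Fin.sum_univ_three]
  rfl

lemma shiftDiv_mobility_mul_shiftGrad (dt : ℝ) (a b μ : GridIdx N → ℝ) (q : GridIdx N) :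
    shiftDiv (gridShift N) N (mobility N dt a b * shiftGrad (gridShift N) N μ) q =
      dxm N (fun r => mobX N dt a b r * Dx N μ r) q
        + dym N (fun r => mobY N dt a b r * Dy N μ r) q
        + dzm N (fun r => mobZ N dt a b r * Dz N μ r) q :=
  shiftDiv_gridShift N _ q

lemma shiftLap_gridShift (f : GridIdx N → ℝ) : shiftLap (gridShift N) N f = lap N f :=
  funext fun q => shiftDiv_gridShift N (shiftGrad (gridShift N) N f) q

variable {N} [NeZero N]

lemma dissipation_gridShift_add_dissipation_gridShift (dt : ℝ) (a b μ a' b' μ' : GridIdx N → ℝ) :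
    dissipation (gridShift N) N (mobility N dt a b) μ
      + dissipation (gridShift N) N (mobility N dt a' b') μ' =
    ∑ q, (mobX N dt a b q * Dx N μ q ^ 2 + mobY N dt a b q * Dy N μ q ^ 2
      + mobZ N dt a b q * Dz N μ q ^ 2 + mobX N dt a' b' q * Dx N μ' q ^ 2
      + mobY N dt a' b' q * Dy N μ' q ^ 2 + mobZ N dt a' b' q * Dz N μ' q ^ 2) := by
  simp only [dissipation, Fin.sum_univ_three, ← Finset.sum_add_distrib, ← add_assoc]
  rfl

lemma energy_grid (n p ψ : GridIdx N → ℝ) :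
    energy ((1 / N : ℝ) ^ 3) n p ψ =
      ip N (fun q => n q * Real.log (n q) + p q * Real.log (p q)) (fun _ => (1 : ℝ))
        + (1 / 2) * ip N (fun q => n q - p q) ψ := by
  simp only [energy, ip, mixingEntropy, dotProduct, Pi.sub_apply, mul_one, Finset.sum_add_distrib]

lemma SolvesSchemeWith.exists_isSpeciesStep {dt Dc : ℝ}
    {n0 nm1 p0 pm1 n1 p1 μn μp : GridIdx N → ℝ}
    (h : SolvesSchemeWith N dt Dc n0 nm1 p0 pm1 n1 p1 μn μp) :
    ∃ φn φp : GridIdx N → ℝ,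
      IsSpeciesStep (gridShift N) N dt (mobility N dt n0 nm1) n0 n1 φn μn ∧
      IsSpeciesStep (gridShift N) N dt
        (mobility N dt (fun s => Dc * p0 s) (fun s => Dc * pm1 s)) p0 p1 φp μp ∧
      (∀ q, -shiftLap (gridShift N) N φn q = (n1 q + n0 q) / 2 - (p1 q + p0 q) / 2) ∧
      ∀ q, -shiftLap (gridShift N) N φp q = (p1 q + p0 q) / 2 - (n1 q + n0 q) / 2 := by
  obtain ⟨φn, φp, -, hφn, -, hφp, hμn, hμp, hn, hp⟩ := h
  simp only [← shiftLap_gridShift] at hφn hφp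
  exact ⟨φn, φp, ⟨hμn, fun q => (hn q).trans (shiftDiv_mobility_mul_shiftGrad ..).symm⟩,
    ⟨hμp, fun q => (hp q).trans (shiftDiv_mobility_mul_shiftGrad ..).symm⟩, hφn, hφp⟩

end Grid

end PNP

/-- Energy stability: `E_h(n^{m+1}, p^{m+1}) + R ≤ E_h(n^m, p^m)` with `R ≥ 0`. -/
theorem stmt10 (N : ℕ) [NeZero N] (dt Dc : ℝ) (hdt : 0 < dt) (hD : 0 < Dc)
    (n0 nm1 p0 pm1 n1 p1 μn μp : GridIdx N → ℝ)
    (hn0 : ∀ q, 0 < n0 q) (hnm1 : ∀ q, 0 < nm1 q)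
    (hp0 : ∀ q, 0 < p0 q) (hpm1 : ∀ q, 0 < pm1 q)
    (hn1 : ∀ q, 0 < n1 q) (hp1 : ∀ q, 0 < p1 q)
    (hzm0 : zeroMean N (fun q => n0 q - p0 q))
    (hzm1 : zeroMean N (fun q => nm1 q - pm1 q))
    (hzm2 : zeroMean N (fun q => n1 q - p1 q))
    (hsol : SolvesSchemeWith N dt Dc n0 nm1 p0 pm1 n1 p1 μn μp)
    (ψ1 ψ0 : GridIdx N → ℝ)
    (hψ1 : zeroMean N ψ1) (hψ1e : ∀ q, -lap N ψ1 q = n1 q - p1 q)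
    (hψ0 : zeroMean N ψ0) (hψ0e : ∀ q, -lap N ψ0 q = n0 q - p0 q) :
    let R : ℝ := dt * (((1 : ℝ) / N) ^ 3 * ∑ q : GridIdx N,
      (mobX N dt n0 nm1 q * (Dx N μn q) ^ 2
       + mobY N dt n0 nm1 q * (Dy N μn q) ^ 2
       + mobZ N dt n0 nm1 q * (Dz N μn q) ^ 2
       + mobX N dt (fun s => Dc * p0 s) (fun s => Dc * pm1 s) q * (Dx N μp q) ^ 2
       + mobY N dt (fun s => Dc * p0 s) (fun s => Dc * pm1 s) q * (Dy N μp q) ^ 2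
       + mobZ N dt (fun s => Dc * p0 s) (fun s => Dc * pm1 s) q * (Dz N μp q) ^ 2));
    0 ≤ R ∧
      (ip N (fun q => n1 q * Real.log (n1 q) + p1 q * Real.log (p1 q)) (fun _ => (1 : ℝ))
        + (1 / 2) * ip N (fun q => n1 q - p1 q) ψ1) + R
      ≤ ip N (fun q => n0 q * Real.log (n0 q) + p0 q * Real.log (p0 q)) (fun _ => (1 : ℝ))
        + (1 / 2) * ip N (fun q => n0 q - p0 q) ψ0 := by
  obtain ⟨φn, φp, hn, hp, hφn, hφp⟩ := hsol.exists_isSpeciesStep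
  simp only [← shiftLap_gridShift, ← energy_grid,
    ← dissipation_gridShift_add_dissipation_gridShift] at hψ1e hψ0e ⊢
  exact stmt10_general (gridShift N) (by positivity) hdt (mobility_nonneg N _ _ _)
    (mobility_nonneg N _ _ _) hn0 hn1 hp0 hp1 hn hp hφn hφp hψ0e hψ1e
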